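/- Let m ≥ 1 and let X be a standard Gaussian vector in ℝ^m. (a) For every real q with 1 ≤ q < ∞: √(2/π) · m^{1/q} ≤ 𝔼‖X‖_q ≤ K · √q · m^{1/q}, where ‖x‖_q = (Σ_{i=1}^m |x_i|^q)^{1/q} and K = √(2π/(e(2π − e))). (b) For the maximum norm ‖x‖_∞ = max_i |x_i|: c · √(1 + log m) ≤ 𝔼‖X‖_∞ ≤ C · √(1 + log m), where c = Φ^{−1}(1 − 1/(2e)) · (1 − e^{−1/e}), C = K · e, and Φ is the cumulative distribution function of the standard normal distribution. -/

import Mathlib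

open MeasureTheory ProbabilityTheory

/-- The distribution of a standard Gaussian vector in `ℝ^m`. -/
noncomputable def stdGaussian (m : ℕ) : Measure (Fin m → ℝ) :=
  Measure.pi fun _ => gaussianReal 0 1

/-- The cumulative distribution function of the standard normal distribution. -/
noncomputable def stdNormalCDF (a : ℝ) : ℝ :=
  (gaussianReal 0 1 (Set.Iic a)).toReal

/-!
The square of a standard Gaussian variable `Z` has law `Γ(1/2, 1/2)`, and this controls both its
moments and its tails.

Moments: `M q = 𝔼|Z|^q` is `2^(q/2) Γ((q+1)/2) / √π`, so `log M` is convex and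
`M (q+2) = (q+1) M q`. Interpolating between `q = 1` and `q = 2`, then climbing by
`M (q+1) ≤ √(q+1) M q`, gives `(M q)^(1/q) ≤ √(2/π) √q`, which is sharp at `q = 1` and improves on
the constant `K`. Jensen's inequality bounds `𝔼‖X‖_q` by `(m M q)^(1/q)`, and the power mean
inequality bounds it below by `m^(1/q) 𝔼|Z|`. For the maximum, `‖x‖_∞ ≤ ‖x‖_q` with `q = 1 + log m`
costs only a factor `m^(1/q) ≤ e`.

Tails: a Gamma density of shape at most one is log-convex on the half-line, and by Hölder's
inequality so is its tail, whence `P(|Z| > t)^s ≤ P(|Z| > t √s)` for `s ≥ 1`. The number `a` is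
chosen so that `P(|Z| > a) = 1/e`. With `s = 1 + log m` each `|X_i|` therefore exceeds `a √s` with
probability at least `1/(e m)`, so by independence the maximum does so with probability at least
`1 - exp(-1/e)`, and Markov's inequality concludes.
-/

open Real Set
open scoped ENNReal NNReal

section NegInvariant

instance isNegInvariant_gaussianReal (v : ℝ≥0) : (gaussianReal 0 v).IsNegInvariant :=
  ⟨(gaussianReal_map_neg (μ := 0) (v := v)).trans (by rw [neg_zero])⟩

lemma lintegral_eq_two_mul_setLIntegral_Ioi_of_even (μ : Measure ℝ) [μ.IsNegInvariant]
    [NullSingletonClass μ] {f : ℝ → ℝ≥0∞} (hf : Function.Even f) :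
    ∫⁻ x, f x ∂μ = 2 * ∫⁻ x in Ioi 0, f x ∂μ := by
  have reflect : ∫⁻ x in Iic 0, f x ∂μ = ∫⁻ x in Ioi 0, f x ∂μ := by
    calc ∫⁻ x in Iic 0, f x ∂μ
        = ∫⁻ x in Iio 0, f x ∂μ := setLIntegral_congr Iio_ae_eq_Iic.symm
      _ = ∫⁻ x in Neg.neg ⁻¹' Ioi 0, f (-x) ∂μ := by simp [hf _]
      _ = ∫⁻ x in Ioi 0, f x ∂μ :=
          (Measure.measurePreserving_neg μ).setLIntegral_comp_preimage_emb
            (MeasurableEquiv.neg ℝ).measurableEmbedding f (Ioi 0)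
  rw [← lintegral_add_compl f measurableSet_Ioi, compl_Ioi, reflect, two_mul]

lemma measure_lt_abs_eq_two_mul (μ : Measure ℝ) [μ.IsNegInvariant] [NullSingletonClass μ]
    {t : ℝ} (ht : 0 ≤ t) : μ {x | t < |x|} = 2 * μ (Ioi t) := by
  have hmeas : MeasurableSet {x : ℝ | t < |x|} := measurableSet_lt (by fun_prop) (by fun_prop)
  have heven : Function.Even ({x : ℝ | t < |x|}.indicator (1 : ℝ → ℝ≥0∞)) := fun x ↦ by
    simp [indicator]
  have hpos : {x : ℝ | t < |x|} ∩ Ioi 0 = Ioi t := by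
    ext x
    simp only [mem_inter_iff, mem_ofPred_eq, mem_Ioi, lt_abs]
    constructor
    · rintro ⟨h | h, hx⟩ <;> linarith
    · exact fun h ↦ ⟨.inl h, ht.trans_lt h⟩
  rw [← lintegral_indicator_one hmeas, lintegral_eq_two_mul_setLIntegral_Ioi_of_even μ heven,
    setLIntegral_indicator hmeas, hpos]
  simp

end NegInvariant

section GammaLaw

lemma measurable_gammaPDF (a r : ℝ) : Measurable (gammaPDF a r) :=
  (measurable_gammaPDFReal a r).ennreal_ofReal

lemma lintegral_gammaMeasure (a r : ℝ) {f : ℝ → ℝ≥0∞} (hf : Measurable f) :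
    ∫⁻ x, f x ∂gammaMeasure a r = ∫⁻ x in Ioi 0, gammaPDF a r x * f x := by
  have hneg : ∫⁻ x in Iic 0, gammaPDF a r x * f x = 0 := by
    rw [← setLIntegral_congr Iio_ae_eq_Iic]
    exact setLIntegral_eq_zero measurableSet_Iio fun x hx ↦ by simp [gammaPDF_of_neg hx]
  rw [gammaMeasure, lintegral_withDensity_eq_lintegral_mul _ (measurable_gammaPDF a r) hf,
    ← lintegral_add_compl _ measurableSet_Ioi, compl_Ioi]
  exact (congrArg _ hneg).trans (add_zero _)

lemma lintegral_Ioi_eq_lintegral_Ioi_comp_sq (f : ℝ → ℝ≥0∞) :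
    ∫⁻ y in Ioi 0, f y = ∫⁻ x in Ioi 0, ENNReal.ofReal (2 * x) * f (x ^ 2) := by
  have himage : (fun x : ℝ ↦ x ^ 2) '' Ioi 0 = Ioi 0 := by
    ext y
    refine ⟨?_, fun hy ↦ ⟨√y, sqrt_pos.2 hy, sq_sqrt (le_of_lt hy)⟩⟩
    rintro ⟨x, hx, rfl⟩
    exact pow_pos (mem_Ioi.1 hx) 2
  have hderiv (x : ℝ) : HasDerivAt (fun x ↦ x ^ 2) (2 * x) x := by
    simpa using hasDerivAt_pow 2 x
  conv_lhs => rw [← himage]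
  exact lintegral_image_eq_lintegral_deriv_mul_of_monotoneOn measurableSet_Ioi
    (fun x _ ↦ (hderiv x).hasDerivWithinAt)
    (fun x hx y _ hxy ↦ pow_le_pow_left₀ (le_of_lt hx) hxy 2) f

lemma two_mul_gaussianPDF_eq_gammaPDF_sq {v : ℝ≥0} (hv : v ≠ 0) {x : ℝ} (hx : 0 < x) :
    2 * gaussianPDF 0 v x = ENNReal.ofReal (2 * x) * gammaPDF (1 / 2) (1 / (2 * v)) (x ^ 2) := by
  have : (0 : ℝ) < v := by positivity
  have hrate : (1 / (2 * v : ℝ)) ^ (1 / 2 : ℝ) = (√(2 * v))⁻¹ := by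
    rw [← sqrt_eq_rpow, one_div, sqrt_inv]
  have hpow : (x ^ 2) ^ (1 / 2 - 1 : ℝ) = x⁻¹ := by
    rw [← rpow_natCast, ← rpow_mul hx.le, ← rpow_neg_one]
    norm_num
  rw [gaussianPDF, gammaPDF_of_nonneg (by positivity), ← ENNReal.ofReal_ofNat,
    ← ENNReal.ofReal_mul (by positivity), ← ENNReal.ofReal_mul (by positivity),
    gaussianPDFReal, Gamma_one_half_eq, hrate, hpow,
    show 2 * π * v = π * (2 * v) by ring, sqrt_mul pi_pos.le,
    show -(x - 0) ^ 2 / (2 * v) = -(1 / (2 * v) * x ^ 2) by ring]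
  congr 1
  field_simp

lemma map_sq_gaussianReal_eq_gammaMeasure {v : ℝ≥0} (hv : v ≠ 0) :
    (gaussianReal 0 v).map (· ^ 2) = gammaMeasure (1 / 2) (1 / (2 * v)) := by
  have : NullSingletonClass (gaussianReal 0 v) := nullSingletonClass_gaussianReal hv
  refine Measure.ext_of_lintegral _ fun f hf ↦ ?_
  calc ∫⁻ y, f y ∂(gaussianReal 0 v).map (· ^ 2)
      = ∫⁻ x, f (x ^ 2) ∂gaussianReal 0 v := lintegral_map hf (by fun_prop)
    _ = 2 * ∫⁻ x in Ioi 0, f (x ^ 2) ∂gaussianReal 0 v :=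
        lintegral_eq_two_mul_setLIntegral_Ioi_of_even _ fun x ↦ by simp only [neg_sq]
    _ = 2 * ∫⁻ x in Ioi 0, gaussianPDF 0 v x * f (x ^ 2) := by
        rw [gaussianReal_of_var_ne_zero _ hv, setLIntegral_withDensity_eq_setLIntegral_mul _
          (measurable_gaussianPDF 0 v) (by fun_prop) measurableSet_Ioi]
        rfl
    _ = ∫⁻ x in Ioi 0, ENNReal.ofReal (2 * x) *
          (gammaPDF (1 / 2) (1 / (2 * v)) (x ^ 2) * f (x ^ 2)) := by
        rw [← lintegral_const_mul' _ _ (by norm_num)]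
        refine setLIntegral_congr_fun measurableSet_Ioi fun x hx ↦ ?_
        simp only [← mul_assoc, two_mul_gaussianPDF_eq_gammaPDF_sq hv hx]
    _ = ∫⁻ y, f y ∂gammaMeasure (1 / 2) (1 / (2 * v)) := by
        rw [lintegral_gammaMeasure _ _ hf, lintegral_Ioi_eq_lintegral_Ioi_comp_sq
          fun y ↦ gammaPDF (1 / 2) (1 / (2 * v)) y * f y]

lemma integral_rpow_gammaMeasure {a r p : ℝ} (ha : 0 < a) (hr : 0 < r) (hp : 0 < a + p) :
    ∫ x, x ^ p ∂gammaMeasure a r = Gamma (a + p) / (Gamma a * r ^ p) := by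
  calc ∫ x, x ^ p ∂gammaMeasure a r
      = ∫ x, gammaPDFReal a r x * x ^ p := by
        rw [gammaMeasure, integral_withDensity_eq_integral_toReal_smul (measurable_gammaPDF a r)
          (.of_forall fun _ ↦ ENNReal.ofReal_lt_top)]
        simp only [gammaPDF, ENNReal.toReal_ofReal (gammaPDFReal_nonneg ha hr _), smul_eq_mul]
    _ = ∫ x in Ici 0, gammaPDFReal a r x * x ^ p :=
        (setIntegral_eq_integral_of_forall_compl_eq_zero fun x hx ↦ by
          rw [gammaPDFReal, if_neg (notMem_Ici.1 hx).not_ge, zero_mul]).symm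
    _ = ∫ x in Ioi 0, r ^ a / Gamma a * (x ^ (a + p - 1) * exp (-(r * x))) := by
        rw [integral_Ici_eq_integral_Ioi]
        refine setIntegral_congr_fun measurableSet_Ioi fun x hx ↦ ?_
        simp only [gammaPDFReal, if_pos (mem_Ioi.1 hx).le]
        rw [add_sub_right_comm, rpow_add hx]
        ring
    _ = Gamma (a + p) / (Gamma a * r ^ p) := by
        rw [integral_const_mul, integral_rpow_mul_exp_neg_mul_Ioi hp hr, one_div,
          inv_rpow hr.le, rpow_add hr]
        have hra : r ^ a ≠ 0 := (rpow_pos_of_pos hr a).ne'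
        field_simp

lemma integral_abs_rpow_gaussianReal {v : ℝ≥0} (hv : v ≠ 0) {q : ℝ} (hq : -1 < q) :
    ∫ x, |x| ^ q ∂gaussianReal 0 v = (2 * v) ^ (q / 2) * Gamma ((q + 1) / 2) / √π := by
  have : (0 : ℝ) < v := by positivity
  have habs (x : ℝ) : |x| ^ q = (x ^ 2) ^ (q / 2) := by
    rw [← sq_abs, ← rpow_natCast, ← rpow_mul (abs_nonneg x), Nat.cast_ofNat,
      mul_div_cancel₀ q two_ne_zero]
  calc ∫ x, |x| ^ q ∂gaussianReal 0 v
      = ∫ y, y ^ (q / 2) ∂(gaussianReal 0 v).map (· ^ 2) := by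
        rw [integral_map (by fun_prop) (by fun_prop)]
        simp only [habs]
    _ = Gamma (1 / 2 + q / 2) / (Gamma (1 / 2) * (1 / (2 * v)) ^ (q / 2)) := by
        rw [map_sq_gaussianReal_eq_gammaMeasure hv,
          integral_rpow_gammaMeasure (by norm_num) (by positivity) (by linarith)]
    _ = (2 * v) ^ (q / 2) * Gamma ((q + 1) / 2) / √π := by
        rw [Gamma_one_half_eq, one_div (2 * v : ℝ), inv_rpow (by positivity), ← add_div,
          add_comm 1 q]
        field_simp

end GammaLaw

section AbsMoment

/-- The absolute moment `𝔼|Z|^q` of a standard Gaussian variable `Z`. -/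
noncomputable def gaussianAbsMoment (q : ℝ) : ℝ :=
  ∫ x, |x| ^ q ∂gaussianReal 0 1

lemma gaussianAbsMoment_eq_Gamma {q : ℝ} (hq : -1 < q) :
    gaussianAbsMoment q = 2 ^ (q / 2) * Gamma ((q + 1) / 2) / √π := by
  simp only [gaussianAbsMoment, integral_abs_rpow_gaussianReal one_ne_zero hq, NNReal.coe_one,
    mul_one]

lemma gaussianAbsMoment_pos {q : ℝ} (hq : -1 < q) : 0 < gaussianAbsMoment q := by
  have hΓ := Gamma_pos_of_pos (show 0 < (q + 1) / 2 by linarith)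
  rw [gaussianAbsMoment_eq_Gamma hq]
  positivity

lemma gaussianAbsMoment_one : gaussianAbsMoment 1 = √(2 / π) := by
  rw [gaussianAbsMoment_eq_Gamma (by norm_num), ← sqrt_eq_rpow, sqrt_div zero_le_two]
  norm_num

lemma gaussianAbsMoment_add_two {q : ℝ} (hq : -1 < q) :
    gaussianAbsMoment (q + 2) = (q + 1) * gaussianAbsMoment q := by
  rw [gaussianAbsMoment_eq_Gamma (by linarith), gaussianAbsMoment_eq_Gamma hq,
    show (q + 2 + 1) / 2 = (q + 1) / 2 + 1 by ring, Gamma_add_one (by linarith),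
    show (q + 2) / 2 = q / 2 + 1 by ring, rpow_add_one two_ne_zero]
  ring

lemma gaussianAbsMoment_two : gaussianAbsMoment 2 = 1 := by
  have hzero : gaussianAbsMoment 0 = 1 := by simp [gaussianAbsMoment]
  simpa [hzero] using gaussianAbsMoment_add_two (q := 0) (by norm_num)

lemma log_gaussianAbsMoment {q : ℝ} (hq : -1 < q) :
    log (gaussianAbsMoment q) = q / 2 * log 2 + log (Gamma ((q + 1) / 2)) - log (√π) := by
  have hΓ := Gamma_pos_of_pos (show 0 < (q + 1) / 2 by linarith)
  rw [gaussianAbsMoment_eq_Gamma hq, log_div (by positivity) (by positivity),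
    log_mul (by positivity) hΓ.ne', log_rpow two_pos]

lemma convexOn_log_gaussianAbsMoment :
    ConvexOn ℝ (Ioi (-1)) fun q ↦ log (gaussianAbsMoment q) := by
  refine ⟨convex_Ioi _, fun p hp q hq a b ha hb hab ↦ ?_⟩
  have hΓ := convexOn_log_Gamma.2 (x := (p + 1) / 2) (y := (q + 1) / 2)
    (by simp only [mem_Ioi] at hp ⊢; linarith) (by simp only [mem_Ioi] at hq ⊢; linarith) ha hb hab
  have hpq := convex_Ioi (-1 : ℝ) hp hq ha hb hab
  simp only [smul_eq_mul, Function.comp_apply, mem_Ioi] at hΓ hp hq hpq ⊢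
  rw [log_gaussianAbsMoment hp, log_gaussianAbsMoment hq, log_gaussianAbsMoment hpq,
    show (a * p + b * q + 1) / 2 = a * ((p + 1) / 2) + b * ((q + 1) / 2) by
      linear_combination (-1 / 2) * hab]
  linear_combination hΓ + log (√π) * hab

lemma gaussianAbsMoment_add_one_le {q : ℝ} (hq : -1 < q) :
    gaussianAbsMoment (q + 1) ≤ √(q + 1) * gaussianAbsMoment q := by
  have hpos := gaussianAbsMoment_pos hq
  have hmid := convexOn_log_gaussianAbsMoment.2 hq (show -1 < q + 2 by linarith)
    (show (0 : ℝ) ≤ 1 / 2 by norm_num) (show (0 : ℝ) ≤ 1 / 2 by norm_num) (by norm_num)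
  simp only [smul_eq_mul, gaussianAbsMoment_add_two hq,
    show 1 / 2 * q + 1 / 2 * (q + 2) = q + 1 by ring] at hmid
  have hq' : 0 < q + 1 := by linarith
  rw [← log_le_log_iff (gaussianAbsMoment_pos (by linarith)) (by positivity),
    log_mul (by positivity) hpos.ne', log_sqrt hq'.le]
  rw [log_mul hq'.ne' hpos.ne'] at hmid
  linarith

lemma gaussianAbsMoment_le_of_le_two {q : ℝ} (hq : 1 ≤ q) (hq2 : q ≤ 2) :
    gaussianAbsMoment q ≤ (2 * q / π) ^ (q / 2) := by
  have hchord := convexOn_log_gaussianAbsMoment.2 (show (-1 : ℝ) < 1 by norm_num)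
    (show (-1 : ℝ) < 2 by norm_num) (sub_nonneg.2 hq2) (sub_nonneg.2 hq) (by ring)
  simp only [smul_eq_mul, gaussianAbsMoment_one, gaussianAbsMoment_two, log_one,
    show (2 - q) * 1 + (q - 1) * 2 = q by ring, mul_zero, add_zero,
    log_sqrt (show 0 ≤ 2 / π by positivity)] at hchord
  rw [← log_le_log_iff (gaussianAbsMoment_pos (by linarith)) (by positivity),
    log_rpow (by positivity), mul_div_right_comm, log_mul (by positivity) (by positivity)]
  have hlogq : q - 1 ≤ q * log q := by
    have := one_sub_inv_le_log_of_pos (show 0 < q by linarith)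
    have := mul_le_mul_of_nonneg_left this (show 0 ≤ q by linarith)
    rwa [mul_sub, mul_one, mul_inv_cancel₀ (by linarith)] at this
  have hlogπ : -(1 / 2) ≤ log (2 / π) := by
    have hexp := quadratic_le_exp_of_nonneg (show (0 : ℝ) ≤ 1 / 2 by norm_num)
    rw [← inv_div π, log_inv, neg_le_neg_iff, log_le_iff_le_exp (by positivity)]
    linarith [pi_lt_d2]
  linear_combination hchord + hlogq / 2 + (q - 1) * hlogπ

lemma pi_div_two_le_one_add_inv_rpow {q : ℝ} (hq : 1 ≤ q) : π / 2 ≤ (1 + q⁻¹) ^ q := by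
  have hbern := one_add_mul_self_le_rpow_one_add (s := q⁻¹)
    (by linarith [inv_nonneg.2 (zero_le_one.trans hq)]) hq
  rw [mul_inv_cancel₀ (by linarith)] at hbern
  linarith [pi_lt_four]

lemma sqrt_mul_rpow_le_rpow_add_one {q : ℝ} (hq : 1 ≤ q) :
    √(q + 1) * (2 * q / π) ^ (q / 2) ≤ (2 * (q + 1) / π) ^ ((q + 1) / 2) := by
  have : 0 < q := by linarith
  have hone : 1 ≤ √(2 / π) * (1 + q⁻¹) ^ (q / 2) := by
    rw [div_eq_mul_one_div q, rpow_mul (by positivity), ← sqrt_eq_rpow, ← sqrt_mul (by positivity),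
      one_le_sqrt, ← inv_div π, ← div_eq_inv_mul, one_le_div (by positivity)]
    exact pi_div_two_le_one_add_inv_rpow hq
  calc √(q + 1) * (2 * q / π) ^ (q / 2)
      ≤ √(q + 1) * (2 * q / π) ^ (q / 2) * (√(2 / π) * (1 + q⁻¹) ^ (q / 2)) :=
        le_mul_of_one_le_right (by positivity) hone
    _ = √(2 / π * (q + 1)) * (2 * q / π * (1 + q⁻¹)) ^ (q / 2) := by
        rw [sqrt_mul (by positivity), mul_rpow (by positivity) (by positivity)]
        ring
    _ = (2 * (q + 1) / π) ^ ((q + 1) / 2) := by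
        rw [show 2 / π * (q + 1) = 2 * (q + 1) / π by ring,
          show 2 * q / π * (1 + q⁻¹) = 2 * (q + 1) / π by field_simp, sqrt_eq_rpow,
          ← rpow_add (by positivity)]
        ring_nf

lemma gaussianAbsMoment_le {q : ℝ} (hq : 1 ≤ q) :
    gaussianAbsMoment q ≤ (2 * q / π) ^ (q / 2) := by
  have key (n : ℕ) : ∀ q : ℝ, 1 ≤ q → q ≤ n + 2 →
      gaussianAbsMoment q ≤ (2 * q / π) ^ (q / 2) := by
    induction n with
    | zero => exact fun q hq hq2 ↦ gaussianAbsMoment_le_of_le_two hq (by simpa using hq2)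
    | succ n ih =>
      intro q hq hqn
      obtain hq2 | hq2 := le_total q 2
      · exact gaussianAbsMoment_le_of_le_two hq hq2
      · have hstep := gaussianAbsMoment_add_one_le (q := q - 1) (by linarith)
        have hbound := sqrt_mul_rpow_le_rpow_add_one (q := q - 1) (by linarith)
        have hprev := ih (q - 1) (by linarith) (by push_cast at hqn; linarith)
        simp only [sub_add_cancel] at hstep hbound
        exact hstep.trans ((mul_le_mul_of_nonneg_left hprev (sqrt_nonneg q)).trans hbound)
  obtain ⟨n, hn⟩ := exists_nat_ge q
  exact key n q hq (by linarith)

lemma gaussianAbsMoment_rpow_inv_le {q : ℝ} (hq : 1 ≤ q) :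
    gaussianAbsMoment q ^ (1 / q) ≤ √(2 / π) * √q := by
  calc gaussianAbsMoment q ^ (1 / q)
      ≤ ((2 * q / π) ^ (q / 2)) ^ (1 / q) :=
        rpow_le_rpow (gaussianAbsMoment_pos (by linarith)).le (gaussianAbsMoment_le hq)
          (by positivity)
    _ = √(2 / π) * √q := by
        rw [← rpow_mul (by positivity), ← sqrt_mul (by positivity), sqrt_eq_rpow]
        field_simp

end AbsMoment

section GammaTail

lemma setLIntegral_Ioi_eq_setLIntegral_Ioi_add (f : ℝ → ℝ≥0∞) (u : ℝ) :
    ∫⁻ t in Ioi u, f t = ∫⁻ t in Ioi 0, f (u + t) := by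
  simpa using ((measurePreserving_add_left volume u).setLIntegral_comp_preimage_emb
    (measurableEmbedding_addLeft u) f (Ioi u)).symm

lemma setLIntegral_Ioi_le_rpow_mul_rpow {f : ℝ → ℝ≥0∞} (hf : Measurable f) {a b : ℝ}
    (ha : 0 ≤ a) (hb : 0 ≤ b) (hab : a + b = 1)
    (hconv : ∀ x > 0, ∀ y > 0, f (a * x + b * y) ≤ f x ^ a * f y ^ b)
    {x y : ℝ} (hx : 0 ≤ x) (hy : 0 ≤ y) :
    ∫⁻ t in Ioi (a * x + b * y), f t ≤ (∫⁻ t in Ioi x, f t) ^ a * (∫⁻ t in Ioi y, f t) ^ b := by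
  simp only [setLIntegral_Ioi_eq_setLIntegral_Ioi_add f]
  calc ∫⁻ t in Ioi 0, f (a * x + b * y + t)
      ≤ ∫⁻ t in Ioi 0, f (x + t) ^ a * f (y + t) ^ b := by
        refine setLIntegral_mono' measurableSet_Ioi fun t ht ↦ ?_
        have ht' : 0 < t := ht
        rw [show a * x + b * y + t = a * (x + t) + b * (y + t) by linear_combination -t * hab]
        exact hconv _ (by positivity) _ (by positivity)
    _ ≤ (∫⁻ t in Ioi 0, f (x + t)) ^ a * (∫⁻ t in Ioi 0, f (y + t)) ^ b :=
        ENNReal.lintegral_mul_norm_pow_le (by fun_prop) (by fun_prop) ha hb hab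

lemma gammaPDF_le_rpow_mul_rpow {k r : ℝ} (hk : 0 < k) (hk1 : k ≤ 1) (hr : 0 < r) {a b : ℝ}
    (ha : 0 ≤ a) (hb : 0 ≤ b) (hab : a + b = 1) {x y : ℝ} (hx : 0 < x) (hy : 0 < y) :
    gammaPDF k r (a * x + b * y) ≤ gammaPDF k r x ^ a * gammaPDF k r y ^ b := by
  have hgeom : (a * x + b * y) ^ (k - 1) ≤ (x ^ a * y ^ b) ^ (k - 1) :=
    rpow_le_rpow_of_nonpos (by positivity)
      (geom_mean_le_arith_mean2_weighted ha hb hx.le hy.le hab) (by linarith)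
  have hC : 0 < r ^ k / Gamma k := div_pos (rpow_pos_of_pos hr k) (Gamma_pos_of_pos hk)
  rw [gammaPDF_of_nonneg (by positivity), gammaPDF_of_nonneg hx.le, gammaPDF_of_nonneg hy.le,
    ENNReal.ofReal_rpow_of_pos (by positivity), ENNReal.ofReal_rpow_of_pos (by positivity),
    ← ENNReal.ofReal_mul (by positivity)]
  refine ENNReal.ofReal_le_ofReal ?_
  calc r ^ k / Gamma k * (a * x + b * y) ^ (k - 1) * exp (-(r * (a * x + b * y)))
      ≤ r ^ k / Gamma k * (x ^ a * y ^ b) ^ (k - 1) * exp (-(r * (a * x + b * y))) := by gcongr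
    _ = (r ^ k / Gamma k) ^ (a + b) * ((x ^ (k - 1)) ^ a * (y ^ (k - 1)) ^ b) *
          (exp (-(r * x)) ^ a * exp (-(r * y)) ^ b) := by
        rw [hab, rpow_one, mul_rpow (by positivity) (by positivity), ← rpow_mul hx.le,
          ← rpow_mul hx.le, ← rpow_mul hy.le, ← rpow_mul hy.le, ← exp_mul, ← exp_mul, ← exp_add]
        ring_nf
    _ = (r ^ k / Gamma k * x ^ (k - 1) * exp (-(r * x))) ^ a *
          (r ^ k / Gamma k * y ^ (k - 1) * exp (-(r * y))) ^ b := by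
        rw [rpow_add hC, mul_rpow (by positivity) (by positivity),
          mul_rpow (by positivity) (by positivity), mul_rpow (by positivity) (by positivity),
          mul_rpow (by positivity) (by positivity)]
        ring

lemma gammaMeasure_Ioi_le_rpow_mul_rpow {k r : ℝ} (hk : 0 < k) (hk1 : k ≤ 1) (hr : 0 < r)
    {a b : ℝ} (ha : 0 ≤ a) (hb : 0 ≤ b) (hab : a + b = 1) {x y : ℝ} (hx : 0 ≤ x) (hy : 0 ≤ y) :
    gammaMeasure k r (Ioi (a * x + b * y)) ≤
      gammaMeasure k r (Ioi x) ^ a * gammaMeasure k r (Ioi y) ^ b := by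
  simp only [gammaMeasure, withDensity_apply _ measurableSet_Ioi]
  exact setLIntegral_Ioi_le_rpow_mul_rpow (measurable_gammaPDF k r) ha hb hab
    (fun x hx y hy ↦ gammaPDF_le_rpow_mul_rpow hk hk1 hr ha hb hab hx hy) hx hy

lemma gammaMeasure_Ioi_rpow_le {k r : ℝ} (hk : 0 < k) (hk1 : k ≤ 1) (hr : 0 < r)
    {s u : ℝ} (hs : 1 ≤ s) (hu : 0 ≤ u) :
    gammaMeasure k r (Ioi u) ^ s ≤ gammaMeasure k r (Ioi (s * u)) := by
  have : IsProbabilityMeasure (gammaMeasure k r) := isProbabilityMeasure_gammaMeasure hk hr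
  have hs0 : 0 < s := by linarith
  have hinv : s⁻¹ ≤ 1 := inv_le_one_of_one_le₀ hs
  have hconv := gammaMeasure_Ioi_le_rpow_mul_rpow hk hk1 hr (inv_nonneg.2 hs0.le)
    (sub_nonneg.2 hinv) (add_sub_cancel _ _) (show 0 ≤ s * u by positivity) le_rfl
  rw [mul_zero, add_zero, inv_mul_cancel_left₀ hs0.ne'] at hconv
  rw [← ENNReal.le_rpow_inv_iff hs0]
  exact hconv.trans (mul_le_of_le_one_right' (ENNReal.rpow_le_one prob_le_one (by linarith)))

lemma gaussianReal_lt_abs_rpow_le {v : ℝ≥0} (hv : v ≠ 0) {s t : ℝ} (hs : 1 ≤ s) (ht : 0 ≤ t) :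
    gaussianReal 0 v {x | t < |x|} ^ s ≤ gaussianReal 0 v {x | t * √s < |x|} := by
  have hlaw (t : ℝ) (ht : 0 ≤ t) :
      gaussianReal 0 v {x | t < |x|} = gammaMeasure (1 / 2) (1 / (2 * v)) (Ioi (t ^ 2)) := by
    rw [← map_sq_gaussianReal_eq_gammaMeasure hv, Measure.map_apply (by fun_prop) measurableSet_Ioi]
    congr 1
    ext x
    simp [sq_lt_sq, abs_of_nonneg ht]
  rw [hlaw t ht, hlaw (t * √s) (by positivity), mul_pow, sq_sqrt (by linarith), mul_comm _ s]
  exact gammaMeasure_Ioi_rpow_le one_half_pos (by norm_num) (by positivity) hs (sq_nonneg t)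

end GammaTail

section PowerMeans

variable {ι : Type*} [Fintype ι]

lemma card_rpow_inv_mul_average_le_rpow_sum_rpow [Nonempty ι] {z : ι → ℝ} (hz : ∀ i, 0 ≤ z i)
    {q : ℝ} (hq : 1 ≤ q) :
    (Fintype.card ι : ℝ) ^ (1 / q) * ((Fintype.card ι : ℝ)⁻¹ * ∑ i, z i) ≤
      (∑ i, z i ^ q) ^ (1 / q) := by
  have hcard : (0 : ℝ) < Fintype.card ι := by exact_mod_cast Fintype.card_pos
  have hsum : 0 ≤ ∑ i, z i ^ q := Finset.sum_nonneg fun i _ ↦ rpow_nonneg (hz i) q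
  have hmean := arith_mean_le_rpow_mean Finset.univ (fun _ ↦ (Fintype.card ι : ℝ)⁻¹) z
    (fun _ _ ↦ by positivity) (by simp) (fun i _ ↦ hz i) hq
  simp only [← Finset.mul_sum] at hmean
  calc (Fintype.card ι : ℝ) ^ (1 / q) * ((Fintype.card ι : ℝ)⁻¹ * ∑ i, z i)
      ≤ (Fintype.card ι : ℝ) ^ (1 / q) * ((Fintype.card ι : ℝ)⁻¹ * ∑ i, z i ^ q) ^ (1 / q) := by
        gcongr
    _ = (∑ i, z i ^ q) ^ (1 / q) := by
        rw [← mul_rpow hcard.le (by positivity), mul_inv_cancel_left₀ hcard.ne']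

lemma iSup_le_rpow_sum_rpow {z : ι → ℝ} (hz : ∀ i, 0 ≤ z i) {q : ℝ} (hq : 0 < q) :
    ⨆ i, z i ≤ (∑ i, z i ^ q) ^ (1 / q) := by
  have hzq (i : ι) : 0 ≤ z i ^ q := rpow_nonneg (hz i) q
  refine Real.iSup_le (fun i ↦ ?_) (rpow_nonneg (Finset.sum_nonneg fun i _ ↦ hzq i) _)
  calc z i = (z i ^ q) ^ (1 / q) := by rw [one_div, rpow_rpow_inv (hz i) hq.ne']
    _ ≤ (∑ i, z i ^ q) ^ (1 / q) :=
      rpow_le_rpow (hzq i) (Finset.single_le_sum (fun i _ ↦ hzq i) (Finset.mem_univ i))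
        (by positivity)

end PowerMeans

section Expectation

variable {Ω ι : Type*} {mΩ : MeasurableSpace Ω} {P : Measure Ω}

lemma integrable_rpow_of_le_one [IsFiniteMeasure P] {Y : Ω → ℝ} (hY : Integrable Y P)
    (hY0 : ∀ ω, 0 ≤ Y ω) {p : ℝ} (hp0 : 0 ≤ p) (hp1 : p ≤ 1) :
    Integrable (fun ω ↦ Y ω ^ p) P := by
  have hnorm (ω : Ω) : ‖Y ω‖ = Y ω := norm_of_nonneg (hY0 ω)
  simpa only [hnorm] using integrable_norm_rpow_of_le hY.aestronglyMeasurable hp0 zero_le_one hp1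
    (by simpa only [hnorm, rpow_one] using hY)

lemma integral_rpow_le_rpow_integral [IsProbabilityMeasure P] {Y : Ω → ℝ} (hY : Integrable Y P)
    (hY0 : ∀ ω, 0 ≤ Y ω) {p : ℝ} (hp0 : 0 ≤ p) (hp1 : p ≤ 1) :
    ∫ ω, Y ω ^ p ∂P ≤ (∫ ω, Y ω ∂P) ^ p :=
  (concaveOn_rpow hp0 hp1).le_map_integral (continuousOn_id.rpow_const fun _ _ ↦ .inr hp0)
    isClosed_Ici (.of_forall hY0) hY (integrable_rpow_of_le_one hY hY0 hp0 hp1)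

variable [Fintype ι] {X : ι → Ω → ℝ} {q : ℝ}

lemma integral_rpow_sum_abs_rpow_le [IsProbabilityMeasure P] (hq : 1 ≤ q)
    (hX : ∀ i, Integrable (fun ω ↦ |X i ω| ^ q) P) {M : ℝ} (hM : ∀ i, ∫ ω, |X i ω| ^ q ∂P ≤ M) :
    ∫ ω, (∑ i, |X i ω| ^ q) ^ (1 / q) ∂P ≤ (Fintype.card ι * M) ^ (1 / q) := by
  have hnonneg (ω : Ω) : 0 ≤ ∑ i, |X i ω| ^ q := by positivity
  have hsum : ∫ ω, ∑ i, |X i ω| ^ q ∂P ≤ Fintype.card ι * M := by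
    rw [integral_finsetSum _ fun i _ ↦ hX i]
    simpa using Finset.sum_le_sum fun i (_ : i ∈ Finset.univ) ↦ hM i
  calc ∫ ω, (∑ i, |X i ω| ^ q) ^ (1 / q) ∂P
      ≤ (∫ ω, ∑ i, |X i ω| ^ q ∂P) ^ (1 / q) :=
        integral_rpow_le_rpow_integral (integrable_finsetSum _ fun i _ ↦ hX i) hnonneg
          (by positivity) ((div_le_one (by linarith)).2 hq)
    _ ≤ (Fintype.card ι * M) ^ (1 / q) :=
        rpow_le_rpow (integral_nonneg hnonneg) hsum (by positivity)

lemma integrable_rpow_sum_abs_rpow [IsFiniteMeasure P] (hq : 1 ≤ q)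
    (hX : ∀ i, Integrable (fun ω ↦ |X i ω| ^ q) P) :
    Integrable (fun ω ↦ (∑ i, |X i ω| ^ q) ^ (1 / q)) P :=
  integrable_rpow_of_le_one (integrable_finsetSum _ fun i _ ↦ hX i) (fun ω ↦ by positivity)
    (by positivity) ((div_le_one (by linarith)).2 hq)

lemma card_rpow_inv_mul_le_integral_rpow_sum_abs_rpow [Nonempty ι] [IsFiniteMeasure P]
    (hq : 1 ≤ q) (hX : ∀ i, Integrable (X i) P) (hXq : ∀ i, Integrable (fun ω ↦ |X i ω| ^ q) P)
    {A : ℝ} (hA : ∀ i, A ≤ ∫ ω, |X i ω| ∂P) :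
    (Fintype.card ι : ℝ) ^ (1 / q) * A ≤ ∫ ω, (∑ i, |X i ω| ^ q) ^ (1 / q) ∂P := by
  have hcard : (0 : ℝ) < Fintype.card ι := by exact_mod_cast Fintype.card_pos
  have haverage : A ≤ (Fintype.card ι : ℝ)⁻¹ * ∑ i, ∫ ω, |X i ω| ∂P := by
    rw [← div_eq_inv_mul, le_div_iff₀' hcard]
    simpa using Finset.sum_le_sum fun i (_ : i ∈ Finset.univ) ↦ hA i
  calc (Fintype.card ι : ℝ) ^ (1 / q) * A
      ≤ (Fintype.card ι : ℝ) ^ (1 / q) * ((Fintype.card ι : ℝ)⁻¹ * ∑ i, ∫ ω, |X i ω| ∂P) := by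
        gcongr
    _ = ∫ ω, (Fintype.card ι : ℝ) ^ (1 / q) * ((Fintype.card ι : ℝ)⁻¹ * ∑ i, |X i ω|) ∂P := by
        rw [integral_const_mul, integral_const_mul, integral_finsetSum _ fun i _ ↦ (hX i).abs]
    _ ≤ ∫ ω, (∑ i, |X i ω| ^ q) ^ (1 / q) ∂P :=
        integral_mono (((integrable_finsetSum _ fun i _ ↦ (hX i).abs).const_mul _).const_mul _)
          (integrable_rpow_sum_abs_rpow hq hXq)
          fun ω ↦ card_rpow_inv_mul_average_le_rpow_sum_rpow (fun i ↦ abs_nonneg (X i ω)) hq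

lemma integrable_iSup_abs {ι : Type*} [Finite ι] {X : ι → Ω → ℝ} (hX : ∀ i, Integrable (X i) P) :
    Integrable (fun ω ↦ ⨆ i, |X i ω|) P := by
  have := Fintype.ofFinite ι
  refine (integrable_finsetSum Finset.univ fun i _ ↦ (hX i).abs).mono'
    (AEMeasurable.iSup fun i ↦ (hX i).aemeasurable.abs).aestronglyMeasurable (.of_forall fun ω ↦ ?_)
  rw [norm_of_nonneg (iSup_nonneg fun i ↦ abs_nonneg (X i ω))]
  simpa using iSup_le_rpow_sum_rpow (fun i ↦ abs_nonneg (X i ω)) one_pos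

lemma one_sub_exp_neg_sum_le_measureReal_iUnion [IsProbabilityMeasure P]
    {m : ι → MeasurableSpace Ω} (hm : iIndep m P) {A : ι → Set Ω}
    (hA : ∀ i, MeasurableSet[m i] (A i)) (hAP : ∀ i, NullMeasurableSet (A i) P) :
    1 - exp (-∑ i, P.real (A i)) ≤ P.real (⋃ i, A i) := by
  have hcompl : P.real (⋃ i, A i)ᶜ = ∏ i, P.real (A i)ᶜ := by
    simp only [compl_iUnion, measureReal_def, hm.meas_iInter fun i ↦ (hA i).compl,
      ENNReal.toReal_prod]
  calc 1 - exp (-∑ i, P.real (A i))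
      = 1 - ∏ i, exp (-P.real (A i)) := by rw [← exp_sum, Finset.sum_neg_distrib]
    _ ≤ 1 - ∏ i, P.real (A i)ᶜ := by
        refine sub_le_sub_left (Finset.prod_le_prod (fun _ _ ↦ measureReal_nonneg) fun i _ ↦ ?_) 1
        rw [probReal_compl_eq_one_sub₀ (hAP i)]
        exact one_sub_le_exp_neg _
    _ = P.real (⋃ i, A i) := by
        rw [← hcompl, probReal_compl_eq_one_sub₀ (.iUnion hAP), sub_sub_cancel]

lemma mul_one_sub_exp_neg_sum_le_integral_iSup_abs (hind : iIndepFun X P)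
    (hX : ∀ i, Integrable (X i) P) {t : ℝ} (ht : 0 ≤ t) :
    t * (1 - exp (-∑ i, P.real {ω | t < |X i ω|})) ≤ ∫ ω, ⨆ i, |X i ω| ∂P := by
  have := hind.isProbabilityMeasure
  have hmeas : MeasurableSet {x : ℝ | t < |x|} := measurableSet_lt (by fun_prop) (by fun_prop)
  have hsub : ⋃ i, {ω | t < |X i ω|} ⊆ {ω | t ≤ ⨆ i, |X i ω|} := iUnion_subset fun i ω hω ↦
    (le_of_lt hω).trans (le_ciSup (f := fun i ↦ |X i ω|) (finite_range _).bddAbove i)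
  calc t * (1 - exp (-∑ i, P.real {ω | t < |X i ω|}))
      ≤ t * P.real (⋃ i, {ω | t < |X i ω|}) := by
        gcongr
        exact one_sub_exp_neg_sum_le_measureReal_iUnion hind (fun i ↦ ⟨_, hmeas, rfl⟩)
          fun i ↦ (hX i).aemeasurable.nullMeasurable hmeas
    _ ≤ t * P.real {ω | t ≤ ⨆ i, |X i ω|} :=
        mul_le_mul_of_nonneg_left (measureReal_mono hsub) ht
    _ ≤ ∫ ω, ⨆ i, |X i ω| ∂P :=
        mul_meas_ge_le_integral_of_nonneg (.of_forall fun ω ↦ iSup_nonneg fun i ↦ abs_nonneg _)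
          (integrable_iSup_abs hX) t

end Expectation

section Gaussian

variable {Ω ι : Type*} {mΩ : MeasurableSpace Ω} {P : Measure Ω}

lemma integral_abs_rpow_of_hasLaw_gaussianReal {Z : Ω → ℝ} (hZ : HasLaw Z (gaussianReal 0 1) P)
    (q : ℝ) : ∫ ω, |Z ω| ^ q ∂P = gaussianAbsMoment q :=
  hZ.integral_comp (f := fun x ↦ |x| ^ q) (measurable_abs.pow_const q).aestronglyMeasurable

lemma integrable_abs_rpow_of_hasLaw_gaussianReal {Z : Ω → ℝ} (hZ : HasLaw Z (gaussianReal 0 1) P)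
    {q : ℝ} (hq : -1 < q) : Integrable (fun ω ↦ |Z ω| ^ q) P :=
  .of_integral_ne_zero <| by
    rw [integral_abs_rpow_of_hasLaw_gaussianReal hZ]
    exact (gaussianAbsMoment_pos hq).ne'

lemma integrable_of_hasLaw_gaussianReal {Z : Ω → ℝ} (hZ : HasLaw Z (gaussianReal 0 1) P) :
    Integrable Z P := by
  rw [← integrable_norm_iff hZ.aemeasurable.aestronglyMeasurable]
  simpa using integrable_abs_rpow_of_hasLaw_gaussianReal hZ (q := 1) (by norm_num)

lemma measureReal_lt_abs_of_stdNormalCDF_eq {a : ℝ} (ha : 0 ≤ a)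
    (hcdf : stdNormalCDF a = 1 - 1 / (2 * exp 1)) :
    (gaussianReal 0 1).real {x | a < |x|} = exp (-1) := by
  have := nullSingletonClass_gaussianReal (μ := 0) (v := 1) one_ne_zero
  rw [measureReal_def, measure_lt_abs_eq_two_mul _ ha, ← compl_Iic, ENNReal.toReal_mul,
    ← measureReal_def, probReal_compl_eq_one_sub measurableSet_Iic, measureReal_def,
    ← stdNormalCDF, hcdf, exp_neg]
  simp only [ENNReal.toReal_ofNat, one_div, mul_inv_rev, sub_sub_cancel]
  field_simp

lemma exp_neg_le_measureReal_mul_sqrt_lt_abs {a : ℝ} (ha : 0 ≤ a)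
    (hcdf : stdNormalCDF a = 1 - 1 / (2 * exp 1)) {s : ℝ} (hs : 1 ≤ s) :
    exp (-s) ≤ (gaussianReal 0 1).real {x | a * √s < |x|} := by
  calc exp (-s) = (gaussianReal 0 1).real {x | a < |x|} ^ s := by
        rw [measureReal_lt_abs_of_stdNormalCDF_eq ha hcdf, ← exp_mul, neg_one_mul]
    _ ≤ (gaussianReal 0 1).real {x | a * √s < |x|} := by
        rw [measureReal_def, measureReal_def, ENNReal.toReal_rpow]
        exact ENNReal.toReal_mono (measure_ne_top _ _)
          (gaussianReal_lt_abs_rpow_le one_ne_zero hs ha)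

variable [Fintype ι] {X : ι → Ω → ℝ}

lemma sqrt_two_div_pi_mul_card_rpow_le_integral [Nonempty ι] [IsFiniteMeasure P]
    (hX : ∀ i, HasLaw (X i) (gaussianReal 0 1) P) {q : ℝ} (hq : 1 ≤ q) :
    √(2 / π) * (Fintype.card ι : ℝ) ^ (1 / q) ≤ ∫ ω, (∑ i, |X i ω| ^ q) ^ (1 / q) ∂P := by
  rw [mul_comm]
  refine card_rpow_inv_mul_le_integral_rpow_sum_abs_rpow hq
    (fun i ↦ integrable_of_hasLaw_gaussianReal (hX i))
    (fun i ↦ integrable_abs_rpow_of_hasLaw_gaussianReal (hX i) (by linarith)) fun i ↦ ?_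
  rw [← gaussianAbsMoment_one, ← integral_abs_rpow_of_hasLaw_gaussianReal (hX i)]
  simp only [rpow_one, le_refl]

lemma integral_rpow_sum_abs_rpow_le_of_hasLaw_gaussianReal [IsProbabilityMeasure P]
    (hX : ∀ i, HasLaw (X i) (gaussianReal 0 1) P) {q : ℝ} (hq : 1 ≤ q) :
    ∫ ω, (∑ i, |X i ω| ^ q) ^ (1 / q) ∂P ≤
      √(2 / π) * √q * (Fintype.card ι : ℝ) ^ (1 / q) := by
  calc ∫ ω, (∑ i, |X i ω| ^ q) ^ (1 / q) ∂P
      ≤ (Fintype.card ι * gaussianAbsMoment q) ^ (1 / q) :=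
        integral_rpow_sum_abs_rpow_le hq
          (fun i ↦ integrable_abs_rpow_of_hasLaw_gaussianReal (hX i) (by linarith))
          fun i ↦ (integral_abs_rpow_of_hasLaw_gaussianReal (hX i) q).le
    _ = gaussianAbsMoment q ^ (1 / q) * (Fintype.card ι : ℝ) ^ (1 / q) := by
        rw [mul_rpow (by positivity) (gaussianAbsMoment_pos (by linarith)).le, mul_comm]
    _ ≤ √(2 / π) * √q * (Fintype.card ι : ℝ) ^ (1 / q) := by
        gcongr
        exact gaussianAbsMoment_rpow_inv_le hq

lemma integral_iSup_abs_le_of_hasLaw_gaussianReal [Nonempty ι] [IsProbabilityMeasure P]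
    (hX : ∀ i, HasLaw (X i) (gaussianReal 0 1) P) :
    ∫ ω, ⨆ i, |X i ω| ∂P ≤ √(2 / π) * exp 1 * √(1 + log (Fintype.card ι)) := by
  have hcard : (1 : ℝ) ≤ Fintype.card ι := by exact_mod_cast Fintype.card_pos
  set q : ℝ := 1 + log (Fintype.card ι)
  have hq : 1 ≤ q := le_add_of_nonneg_right (log_nonneg hcard)
  have hroot : (Fintype.card ι : ℝ) ^ (1 / q) ≤ exp 1 := by
    rw [rpow_def_of_pos (by linarith), exp_le_exp, mul_one_div, div_le_one (by linarith)]
    exact le_add_of_nonneg_left zero_le_one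
  calc ∫ ω, ⨆ i, |X i ω| ∂P
      ≤ ∫ ω, (∑ i, |X i ω| ^ q) ^ (1 / q) ∂P :=
        integral_mono (integrable_iSup_abs fun i ↦ integrable_of_hasLaw_gaussianReal (hX i))
          (integrable_rpow_sum_abs_rpow hq fun i ↦
            integrable_abs_rpow_of_hasLaw_gaussianReal (hX i) (by linarith))
          fun ω ↦ iSup_le_rpow_sum_rpow (fun i ↦ abs_nonneg (X i ω)) (by linarith)
    _ ≤ √(2 / π) * √q * (Fintype.card ι : ℝ) ^ (1 / q) :=
        integral_rpow_sum_abs_rpow_le_of_hasLaw_gaussianReal hX hq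
    _ ≤ √(2 / π) * √q * exp 1 := by gcongr
    _ = √(2 / π) * exp 1 * √q := mul_right_comm _ _ _

lemma mul_sqrt_one_add_log_card_le_integral_iSup_abs [Nonempty ι]
    (hX : ∀ i, HasLaw (X i) (gaussianReal 0 1) P) (hind : iIndepFun X P) {a : ℝ}
    (hcdf : stdNormalCDF a = 1 - 1 / (2 * exp 1)) :
    a * (1 - exp (-1 / exp 1)) * √(1 + log (Fintype.card ι)) ≤ ∫ ω, ⨆ i, |X i ω| ∂P := by
  have hcard : (1 : ℝ) ≤ Fintype.card ι := by exact_mod_cast Fintype.card_pos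
  set s : ℝ := 1 + log (Fintype.card ι)
  have hs : 1 ≤ s := le_add_of_nonneg_right (log_nonneg hcard)
  have hconst : 0 ≤ 1 - exp (-1 / exp 1) := by
    rw [sub_nonneg, exp_le_one_iff, neg_div, neg_nonpos]
    positivity
  obtain ha | ha := lt_or_ge a 0
  · exact (mul_nonpos_of_nonpos_of_nonneg (mul_nonpos_of_nonpos_of_nonneg ha.le hconst)
      (sqrt_nonneg s)).trans (integral_nonneg fun ω ↦ iSup_nonneg fun i ↦ abs_nonneg (X i ω))
  have htail (i : ι) : exp (-s) ≤ P.real {ω | a * √s < |X i ω|} := by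
    rw [(hX i).measureReal_eq (p := fun x ↦ a * √s < |x|)
      (measurableSet_lt (by fun_prop) (by fun_prop))]
    exact exp_neg_le_measureReal_mul_sqrt_lt_abs ha hcdf hs
  have hsum : 1 / exp 1 ≤ ∑ i, P.real {ω | a * √s < |X i ω|} := by
    calc 1 / exp 1 = ∑ _i : ι, exp (-s) := by
          rw [Finset.sum_const, Finset.card_univ, nsmul_eq_mul, neg_add, exp_add, exp_neg (log _),
            exp_log (by linarith), exp_neg]
          field_simp
      _ ≤ ∑ i, P.real {ω | a * √s < |X i ω|} := Finset.sum_le_sum fun i _ ↦ htail i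
  calc a * (1 - exp (-1 / exp 1)) * √s
      = a * √s * (1 - exp (-(1 / exp 1))) := by rw [neg_div]; ring
    _ ≤ a * √s * (1 - exp (-∑ i, P.real {ω | a * √s < |X i ω|})) := by gcongr
    _ ≤ ∫ ω, ⨆ i, |X i ω| ∂P :=
        mul_one_sub_exp_neg_sum_le_integral_iSup_abs hind
          (fun i ↦ integrable_of_hasLaw_gaussianReal (hX i)) (by positivity)

end Gaussian

lemma sqrt_two_div_pi_le_sqrt_two_pi_div :
    √(2 / π) ≤ √(2 * π / (exp 1 * (2 * π - exp 1))) := by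
  have hden : 0 < exp 1 * (2 * π - exp 1) :=
    mul_pos (exp_pos 1) (by linarith [exp_one_lt_d9, pi_gt_three])
  refine sqrt_le_sqrt ?_
  rw [div_le_div_iff₀ pi_pos hden]
  linear_combination 2 * sq_nonneg (π - exp 1)

lemma hasLaw_eval_stdGaussian (m : ℕ) (i : Fin m) :
    HasLaw (fun x : Fin m → ℝ ↦ x i) (gaussianReal 0 1) (stdGaussian m) :=
  (measurePreserving_eval (fun _ ↦ gaussianReal 0 1) i).hasLaw

lemma iIndepFun_eval_stdGaussian (m : ℕ) :
    iIndepFun (fun (i : Fin m) (x : Fin m → ℝ) ↦ x i) (stdGaussian m) :=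
  iIndepFun_pi (X := fun _ ↦ id) fun _ ↦ aemeasurable_id

instance isProbabilityMeasure_stdGaussian (m : ℕ) : IsProbabilityMeasure (stdGaussian m) :=
  inferInstanceAs (IsProbabilityMeasure (Measure.pi fun _ : Fin m ↦ gaussianReal 0 1))

theorem stmt19_general {Ω ι : Type*} [MeasurableSpace Ω] {P : Measure Ω}
    [IsProbabilityMeasure P] [Fintype ι] [Nonempty ι] {X : ι → Ω → ℝ}
    (hX : ∀ i, HasLaw (X i) (gaussianReal 0 1) P) :
    (∀ q : ℝ, 1 ≤ q →
      √(2 / π) * (Fintype.card ι : ℝ) ^ (1 / q) ≤ ∫ ω, (∑ i, |X i ω| ^ q) ^ (1 / q) ∂P ∧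
      ∫ ω, (∑ i, |X i ω| ^ q) ^ (1 / q) ∂P ≤
        √(2 / π) * √q * (Fintype.card ι : ℝ) ^ (1 / q)) ∧
    (iIndepFun X P → ∀ a : ℝ, stdNormalCDF a = 1 - 1 / (2 * exp 1) →
      a * (1 - exp (-1 / exp 1)) * √(1 + log (Fintype.card ι)) ≤ ∫ ω, ⨆ i, |X i ω| ∂P) ∧
    ∫ ω, ⨆ i, |X i ω| ∂P ≤ √(2 / π) * exp 1 * √(1 + log (Fintype.card ι)) :=
  ⟨fun _ hq ↦ ⟨sqrt_two_div_pi_mul_card_rpow_le_integral hX hq,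
    integral_rpow_sum_abs_rpow_le_of_hasLaw_gaussianReal hX hq⟩,
    fun hind _ ha ↦ mul_sqrt_one_add_log_card_le_integral_iSup_abs hX hind ha,
    integral_iSup_abs_le_of_hasLaw_gaussianReal hX⟩

theorem stmt19 (m : ℕ) (hm : 1 ≤ m) :
    (∀ q : ℝ, 1 ≤ q →
      Real.sqrt (2 / Real.pi) * (m : ℝ) ^ (1 / q) ≤
        (∫ x, (∑ i, |x i| ^ q) ^ (1 / q) ∂stdGaussian m) ∧
      (∫ x, (∑ i, |x i| ^ q) ^ (1 / q) ∂stdGaussian m) ≤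
        Real.sqrt (2 * Real.pi / (Real.exp 1 * (2 * Real.pi - Real.exp 1))) *
          Real.sqrt q * (m : ℝ) ^ (1 / q)) ∧
    (∀ a : ℝ, stdNormalCDF a = 1 - 1 / (2 * Real.exp 1) →
      a * (1 - Real.exp (-1 / Real.exp 1)) * Real.sqrt (1 + Real.log m) ≤
        ∫ x, (⨆ i, |x i|) ∂stdGaussian m) ∧
    (∫ x, (⨆ i, |x i|) ∂stdGaussian m) ≤
      Real.sqrt (2 * Real.pi / (Real.exp 1 * (2 * Real.pi - Real.exp 1))) *
        Real.exp 1 * Real.sqrt (1 + Real.log m) := by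
  have : Nonempty (Fin m) := Fin.pos_iff_nonempty.1 hm
  obtain ⟨hnorm, hmax_ge, hmax_le⟩ := stmt19_general (hasLaw_eval_stdGaussian m)
  simp only [Fintype.card_fin] at hnorm hmax_ge hmax_le
  have hK := sqrt_two_div_pi_le_sqrt_two_pi_div
  exact ⟨fun q hq ↦ ⟨(hnorm q hq).1, (hnorm q hq).2.trans (by gcongr)⟩,
    hmax_ge (iIndepFun_eval_stdGaussian m), hmax_le.trans (by gcongr)⟩
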